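/- Let p, q > 1, a ≥ 1 and b ≤ a. Then arsinh_{p,q} is (a,b)-concave on (0,∞): for all r, s > 0, arsinh_{p,q}(((r^a + s^a)/2)^{1/a}) ≥ M_b(arsinh_{p,q}(r), arsinh_{p,q}(s)). -/

import Mathlib

open Real Set

/-- `arsinhPQ p q x = ∫₀ˣ (1 + tᵠ)^(-1/p) dt`, the generalized inverse hyperbolic sine. -/
noncomputable def arsinhPQ (p q x : ℝ) : ℝ := ∫ t in (0:ℝ)..x, (1 + t ^ q) ^ (-(1/p))

/-- The power mean `M_a(x,y)`: `((x^a + y^a)/2)^(1/a)` for `a ≠ 0` and `√(xy)` for `a = 0`. -/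
noncomputable def powerMean (a x y : ℝ) : ℝ :=
  if a = 0 then Real.sqrt (x * y) else ((x ^ a + y ^ a) / 2) ^ (1/a)

/-!
A positive concave function `f` on `(0, ∞)` lies below a supporting line `x ↦ c + d * x` through
the point of its graph above `m = M_a(r, s)`, and positivity of `f` forces `c, d ≥ 0`. By
Minkowski's inequality `M_a(c + d * r, c + d * s) ≤ c + d * m = f m`, so `M_a(f r, f s) ≤ f m`;
passing from `a` to `b ≤ a` only decreases the left-hand side. The function `arsinhPQ p q` is
concave because it is a primitive of a decreasing function.
-/

section PowerMean

variable {a b x y x' y' : ℝ}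

lemma powerMean_zero (x y : ℝ) : powerMean 0 x y = √(x * y) := if_pos rfl

lemma powerMean_one (x y : ℝ) : powerMean 1 x y = (x + y) / 2 := by simp [powerMean]

lemma powerMean_of_ne_zero (ha : a ≠ 0) (x y : ℝ) :
    powerMean a x y = ((x ^ a + y ^ a) / 2) ^ (1 / a) := if_neg ha

lemma powerMean_pos (a : ℝ) (hx : 0 < x) (hy : 0 < y) : 0 < powerMean a x y := by
  rw [powerMean]
  split_ifs <;> positivity

lemma powerMean_self (a : ℝ) (hx : 0 ≤ x) : powerMean a x x = x := by
  rcases eq_or_ne a 0 with rfl | ha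
  · rw [powerMean_zero, sqrt_mul_self hx]
  · rw [powerMean_of_ne_zero ha, add_self_div_two, one_div, rpow_rpow_inv hx ha]

lemma powerMean_mul_left (a : ℝ) {d : ℝ} (hd : 0 ≤ d) (hx : 0 ≤ x) (hy : 0 ≤ y) :
    powerMean a (d * x) (d * y) = d * powerMean a x y := by
  rcases eq_or_ne a 0 with rfl | ha
  · rw [powerMean_zero, powerMean_zero, mul_mul_mul_comm, sqrt_mul (by positivity),
      sqrt_mul_self hd]
  · rw [powerMean_of_ne_zero ha, powerMean_of_ne_zero ha, mul_rpow hd hx, mul_rpow hd hy, ← mul_add,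
      mul_div_assoc, mul_rpow (by positivity) (by positivity), one_div, rpow_rpow_inv hd ha]

lemma powerMean_le_powerMean (ha : 0 ≤ a) (hx : 0 ≤ x) (hy : 0 ≤ y)
    (hxx' : x ≤ x') (hyy' : y ≤ y') : powerMean a x y ≤ powerMean a x' y' := by
  have hx' := hx.trans hxx'
  rw [powerMean, powerMean]
  split_ifs <;> gcongr

lemma powerMean_rpow_rpow (a b : ℝ) (hx : 0 ≤ x) (hy : 0 ≤ y) :
    powerMean a (x ^ b) (y ^ b) = powerMean (a * b) x y ^ b := by
  rcases eq_or_ne b 0 with rfl | hb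
  · simp_rw [rpow_zero, powerMean_self a zero_le_one]
  rcases eq_or_ne a 0 with rfl | ha
  · rw [zero_mul, powerMean_zero, powerMean_zero, ← mul_rpow hx hy, sqrt_eq_rpow, sqrt_eq_rpow,
      ← rpow_mul (by positivity), ← rpow_mul (by positivity), mul_comm b]
  · rw [powerMean_of_ne_zero ha, powerMean_of_ne_zero (mul_ne_zero ha hb), ← rpow_mul hx,
      ← rpow_mul hy, ← rpow_mul (by positivity), mul_comm b a]
    congr 1
    field_simp

lemma powerMean_neg_eq_inv (a : ℝ) (hx : 0 ≤ x) (hy : 0 ≤ y) :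
    powerMean (-a) x y = (powerMean a x⁻¹ y⁻¹)⁻¹ := by
  simpa [rpow_neg_one] using (congrArg (·⁻¹) (powerMean_rpow_rpow a (-1) hx hy)).symm

lemma powerMean_add_le (ha : 1 ≤ a) (hx : 0 ≤ x) (hy : 0 ≤ y) (hx' : 0 ≤ x') (hy' : 0 ≤ y') :
    powerMean a (x + x') (y + y') ≤ powerMean a x y + powerMean a x' y' := by
  have ha0 : 0 < a := by linarith
  have minkowski : ((x + x') ^ a + (y + y') ^ a) ^ (1 / a) ≤
      (x ^ a + y ^ a) ^ (1 / a) + (x' ^ a + y' ^ a) ^ (1 / a) := by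
    simpa using Real.Lp_add_le_of_nonneg (s := Finset.univ) (f := ![x, y]) (g := ![x', y']) ha
      (by simp [Fin.forall_fin_two, hx, hy]) (by simp [Fin.forall_fin_two, hx', hy'])
  simp only [powerMean_of_ne_zero ha0.ne']
  rw [div_rpow (by positivity) zero_le_two, div_rpow (by positivity) zero_le_two,
    div_rpow (by positivity) zero_le_two, ← add_div]
  gcongr

lemma powerMean_le_half_add (hb : 0 ≤ b) (hb1 : b ≤ 1) (hx : 0 ≤ x) (hy : 0 ≤ y) :
    powerMean b x y ≤ (x + y) / 2 := by
  rcases hb.eq_or_lt with rfl | hb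
  · rw [powerMean_zero, sqrt_le_left (by positivity)]
    linarith [four_mul_le_sq_add x y]
  · have jensen := (concaveOn_rpow hb.le hb1).2 hx hy one_half_pos.le one_half_pos.le (add_halves 1)
    rw [powerMean_of_ne_zero hb.ne', one_div,
      rpow_inv_le_iff_of_pos (by positivity) (by positivity) hb]
    simpa only [smul_eq_mul, one_div_mul_eq_div, ← add_div] using jensen

lemma powerMean_exponent_mono_of_nonneg (hb : 0 ≤ b) (hba : b ≤ a) (hx : 0 < x) (hy : 0 < y) :
    powerMean b x y ≤ powerMean a x y := by
  rcases hba.eq_or_lt with rfl | hba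
  · rfl
  have ha : 0 < a := hb.trans_lt hba
  rw [← rpow_le_rpow_iff (powerMean_pos b hx hy).le (powerMean_pos a hx hy).le ha]
  calc powerMean b x y ^ a
      = powerMean (b / a) (x ^ a) (y ^ a) := by
        rw [powerMean_rpow_rpow _ _ hx.le hy.le, div_mul_cancel₀ b ha.ne']
    _ ≤ (x ^ a + y ^ a) / 2 :=
        powerMean_le_half_add (by positivity) ((div_le_one ha).2 hba.le) (by positivity)
          (by positivity)
    _ = powerMean a x y ^ a := by
        rw [← powerMean_one, powerMean_rpow_rpow _ _ hx.le hy.le, one_mul]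

theorem monotone_powerMean_exponent (hx : 0 < x) (hy : 0 < y) :
    Monotone fun a ↦ powerMean a x y := by
  intro b a hba
  have of_nonpos {b a : ℝ} (hba : b ≤ a) (ha : a ≤ 0) : powerMean b x y ≤ powerMean a x y := by
    have h := powerMean_exponent_mono_of_nonneg (neg_nonneg.2 ha) (neg_le_neg hba)
      (inv_pos.2 hx) (inv_pos.2 hy)
    rw [← neg_neg a, ← neg_neg b, powerMean_neg_eq_inv _ hx.le hy.le,
      powerMean_neg_eq_inv _ hx.le hy.le]
    exact inv_anti₀ (powerMean_pos _ (inv_pos.2 hx) (inv_pos.2 hy)) h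
  rcases le_total 0 b with hb | hb
  · exact powerMean_exponent_mono_of_nonneg hb hba hx hy
  rcases le_total a 0 with ha | ha
  · exact of_nonpos hba ha
  · exact (of_nonpos hb le_rfl).trans (powerMean_exponent_mono_of_nonneg le_rfl ha hx hy)

end PowerMean

/-- `(a, b)`-concavity of `f` on `I`: `M_b(f x, f y) ≤ f (M_a(x, y))` for all `x, y ∈ I`.
The set `I` is arbitrary, so `M_a(x, y)` is not required to lie in it. -/
def PowerMeanConcaveOn (a b : ℝ) (I : Set ℝ) (f : ℝ → ℝ) : Prop :=
  ∀ x ∈ I, ∀ y ∈ I, powerMean b (f x) (f y) ≤ f (powerMean a x y)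

section Concave

variable {a b c d m : ℝ} {s : Set ℝ} {f : ℝ → ℝ}

lemma PowerMeanConcaveOn.of_exponent_le (hf : PowerMeanConcaveOn a c s f)
    (hpos : ∀ x ∈ s, 0 < f x) (hbc : b ≤ c) : PowerMeanConcaveOn a b s f :=
  fun x hx y hy ↦ (monotone_powerMean_exponent (hpos x hx) (hpos y hy) hbc).trans (hf x hx y hy)

lemma exists_le_add_mul_sub_of_concaveOn (hf : ConcaveOn ℝ s f) (hm : m ∈ interior s) :
    ∃ d, ∀ x ∈ s, f x ≤ f m + d * (x - m) := by
  refine ⟨-derivWithin (-f) (Ioi m) m, fun x hx ↦ ?_⟩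
  rcases lt_trichotomy x m with hxm | rfl | hmx
  · have h := (hf.neg.slope_le_leftDeriv_of_mem_interior hx hm hxm).trans
      (hf.neg.leftDeriv_le_rightDeriv_of_mem_interior hm)
    rw [slope_def_field, div_le_iff₀ (sub_pos.2 hxm)] at h
    simp only [Pi.neg_apply] at h
    linarith
  · simp
  · have h := hf.neg.rightDeriv_le_slope_of_mem_interior hm hx hmx
    rw [slope_def_field, le_div_iff₀ (sub_pos.2 hmx)] at h
    simp only [Pi.neg_apply] at h
    linarith

lemma nonneg_of_forall_pos_nonneg_add_mul {K : Type*} [Field K] [LinearOrder K]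
    [IsStrictOrderedRing K] {c d : K} (h : ∀ x, 0 < x → 0 ≤ c + d * x) : 0 ≤ c ∧ 0 ≤ d := by
  have h1 := h 1 one_pos
  constructor
  · by_contra! hc
    have hd : 0 < d := by linarith
    have hx : d * (-c / (2 * d)) = -c / 2 := by field_simp
    linarith [h (-c / (2 * d)) (by apply div_pos <;> linarith)]
  · by_contra! hd
    have hc : 0 < c := by linarith
    have hx : d * (2 * c / -d) = -(2 * c) := by field_simp [hd.ne]
    linarith [h (2 * c / -d) (by apply div_pos <;> linarith)]

theorem powerMeanConcaveOn_self_of_concaveOn (hf : ConcaveOn ℝ (Ioi 0) f)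
    (hpos : ∀ x ∈ Ioi 0, 0 < f x) (ha : 1 ≤ a) : PowerMeanConcaveOn a a (Ioi 0) f := by
  intro r hr s hs
  have hm := powerMean_pos a hr hs
  set m := powerMean a r s
  obtain ⟨d, hd⟩ := exists_le_add_mul_sub_of_concaveOn hf (by rwa [interior_Ioi])
  set c := f m - d * m
  have le_line : ∀ x, 0 < x → f x ≤ c + d * x := fun x hx ↦ (hd x hx).trans_eq (by ring)
  obtain ⟨hc0, hd0⟩ : 0 ≤ c ∧ 0 ≤ d := nonneg_of_forall_pos_nonneg_add_mul
    fun x hx ↦ (hpos x hx).le.trans (le_line x hx)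
  have hr0 : 0 ≤ r := hr.le
  have hs0 : 0 ≤ s := hs.le
  calc powerMean a (f r) (f s)
      ≤ powerMean a (c + d * r) (c + d * s) :=
        powerMean_le_powerMean (by linarith) (hpos r hr).le (hpos s hs).le
          (le_line r hr) (le_line s hs)
    _ ≤ powerMean a c c + powerMean a (d * r) (d * s) :=
        powerMean_add_le ha hc0 hc0 (by positivity) (by positivity)
    _ = c + d * m := by rw [powerMean_self a hc0, powerMean_mul_left a hd0 hr0 hs0]
    _ = f m := sub_add_cancel _ _

theorem powerMeanConcaveOn_of_concaveOn (hf : ConcaveOn ℝ (Ioi 0) f)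
    (hpos : ∀ x ∈ Ioi 0, 0 < f x) (ha : 1 ≤ a) (hba : b ≤ a) :
    PowerMeanConcaveOn a b (Ioi 0) f :=
  (powerMeanConcaveOn_self_of_concaveOn hf hpos ha).of_exponent_le hpos hba

end Concave

section AntitoneIntegral

variable {g : ℝ → ℝ} {s : Set ℝ} {a x y : ℝ}

lemma integral_le_mul_sub_of_antitoneOn (hg : AntitoneOn g (Icc x y)) (hxy : x ≤ y) :
    ∫ t in x..y, g t ≤ g x * (y - x) := by
  have hint : IntervalIntegrable g MeasureTheory.volume x y :=
    AntitoneOn.intervalIntegrable (by rwa [uIcc_of_le hxy])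
  calc ∫ t in x..y, g t
      ≤ ∫ _ in x..y, g x := intervalIntegral.integral_mono_on hxy hint intervalIntegrable_const
        fun t ht ↦ hg (left_mem_Icc.2 hxy) ht ht.1
    _ = g x * (y - x) := by rw [intervalIntegral.integral_const, smul_eq_mul, mul_comm]

lemma mul_sub_le_integral_of_antitoneOn (hg : AntitoneOn g (Icc x y)) (hxy : x ≤ y) :
    g y * (y - x) ≤ ∫ t in x..y, g t := by
  have hint : IntervalIntegrable g MeasureTheory.volume x y :=
    AntitoneOn.intervalIntegrable (by rwa [uIcc_of_le hxy])
  calc g y * (y - x)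
      = ∫ _ in x..y, g y := by rw [intervalIntegral.integral_const, smul_eq_mul, mul_comm]
    _ ≤ ∫ t in x..y, g t := intervalIntegral.integral_mono_on hxy intervalIntegrable_const hint
        fun t ht ↦ hg ht (right_mem_Icc.2 hxy) ht.2

theorem concaveOn_integral_of_antitoneOn (hs : Convex ℝ s) (ha : a ∈ s) (hg : AntitoneOn g s) :
    ConcaveOn ℝ s fun x ↦ ∫ t in a..x, g t := by
  have hint {u v : ℝ} (hu : u ∈ s) (hv : v ∈ s) :
      IntervalIntegrable g MeasureTheory.volume u v :=
    (hg.mono (hs.ordConnected.uIcc_subset hu hv)).intervalIntegrable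
  refine concaveOn_of_slope_anti_adjacent hs fun {x y z} hx hz hxy hyz ↦ ?_
  have hy : y ∈ s := hs.ordConnected.out hx hz ⟨hxy.le, hyz.le⟩
  rw [intervalIntegral.integral_interval_sub_left (hint ha hz) (hint ha hy),
    intervalIntegral.integral_interval_sub_left (hint ha hy) (hint ha hx)]
  calc (∫ t in y..z, g t) / (z - y)
      ≤ g y := (div_le_iff₀ (sub_pos.2 hyz)).2 <|
        integral_le_mul_sub_of_antitoneOn (hg.mono (hs.ordConnected.out hy hz)) hyz.le
    _ ≤ (∫ t in x..y, g t) / (y - x) := (le_div_iff₀ (sub_pos.2 hxy)).2 <|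
        mul_sub_le_integral_of_antitoneOn (hg.mono (hs.ordConnected.out hx hy)) hxy.le

end AntitoneIntegral

section Arsinh

variable {p q x : ℝ}

lemma antitoneOn_arsinhPQ_integrand (hp : 0 < p) (hq : 0 ≤ q) :
    AntitoneOn (fun t : ℝ ↦ (1 + t ^ q) ^ (-(1 / p))) (Ici 0) := by
  intro x hx y _ hxy
  have hx0 : 0 ≤ x := hx
  refine rpow_le_rpow_of_nonpos (by positivity) ?_ (neg_nonpos.2 (by positivity))
  gcongr

lemma concaveOn_arsinhPQ (hp : 0 < p) (hq : 0 ≤ q) : ConcaveOn ℝ (Ici 0) (arsinhPQ p q) :=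
  concaveOn_integral_of_antitoneOn (convex_Ici 0) self_mem_Ici (antitoneOn_arsinhPQ_integrand hp hq)

lemma arsinhPQ_pos (hp : 0 < p) (hq : 0 ≤ q) (hx : 0 < x) : 0 < arsinhPQ p q x := by
  refine intervalIntegral.intervalIntegral_pos_of_pos_on ?_ (fun t ht ↦ ?_) hx
  · exact ((antitoneOn_arsinhPQ_integrand hp hq).mono
      (ordConnected_Ici.uIcc_subset self_mem_Ici hx.le)).intervalIntegrable
  · have ht0 : 0 < t := ht.1
    positivity

end Arsinh

theorem arsinhPQ_ab_concave_one_le_general {p q a b : ℝ} (hp : 0 < p) (hq : 0 ≤ q)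
    (ha : 1 ≤ a) (hb : b ≤ a) : PowerMeanConcaveOn a b (Ioi 0) (arsinhPQ p q) :=
  powerMeanConcaveOn_of_concaveOn
    ((concaveOn_arsinhPQ hp hq).subset Ioi_subset_Ici_self (convex_Ioi 0))
    (fun _ ↦ arsinhPQ_pos hp hq) ha hb

theorem arsinhPQ_ab_concave_one_le (p q a b : ℝ) (hp : 1 < p) (hq : 1 < q)
    (ha : 1 ≤ a) (hb : b ≤ a)
    (r s : ℝ) (hr : 0 < r) (hs : 0 < s) :
    arsinhPQ p q (((r ^ a + s ^ a) / 2) ^ (1/a)) ≥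
      powerMean b (arsinhPQ p q r) (arsinhPQ p q s) := by
  rw [← powerMean_of_ne_zero (by positivity : a ≠ 0)]
  exact arsinhPQ_ab_concave_one_le_general (by linarith) (by linarith) ha hb r hr s hs
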